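/- Asymptotics of the s-perimeter as s → 0⁺: let Ω ⊆ ℝⁿ be a bounded open set with finite classical perimeter, and let E₀ ⊆ ℝⁿ \ Ω. Then limsup_{s→0⁺} s · P_s(E₀, Ω) = ᾱ(E₀) · |Ω|. -/

import Mathlib

/-! Over `Ω × E₀`, the kernel `|x - y|^{-n-s}` of `P_s(E₀, Ω)` differs from the kernel of the tail
integral, `|y|^{-n-s}` for `|y| ≥ 1`, by at most an integrable function that does not depend on
`s ∈ (0, s₀]`. For large `|y|` the mean value theorem gives the difference an extra factor
`1 / |y|`. For bounded `y` the difference is at most `|x - y|^{-n-s₀} + 1`, and the integral of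
`|x - y|^{-n-s₀}` over `Ω × Ωᶜ` is `∫ |h|^{-n-s₀} |Ω \ (Ω - h)| dh`, which is finite for
`0 < s₀ < 1` because `|Ω \ (Ω - h)|` is at most both `|Ω|` and `Per(Ω) |h|`. Multiplication by
`s → 0` therefore removes the difference, and `s` times the tail integral stays bounded.
-/

open MeasureTheory Filter Metric Topology

/-- The weighted tail integral `∫_{ℝⁿ \ B_r(q)} χ_E(y) / |q - y|^{n+s} dy`. -/
noncomputable def tailIntegral (n : ℕ) (E : Set (EuclideanSpace ℝ (Fin n))) (s : ℝ)
    (q : EuclideanSpace ℝ (Fin n)) (r : ℝ) : ℝ :=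
  ∫ y in (ball q r)ᶜ, E.indicator (fun _ => (1 : ℝ)) y / ‖q - y‖ ^ ((n : ℝ) + s)

/-- `ᾱ(E)`, the limsup as `s → 0⁺` of `s ∫_{ℝⁿ \ B₁} χ_E(y)/|y|^{n+s} dy`. -/
noncomputable def alphaBar (n : ℕ) (E : Set (EuclideanSpace ℝ (Fin n))) : ℝ :=
  limsup (fun s : ℝ => s * tailIntegral n E s 0 1) (𝓝[>] (0 : ℝ))

/-- Since `E₀ ∩ Ω = ∅`, the fractional perimeter of `E₀` in `Ω` reduces to
`P_s(E₀, Ω) = ∫_Ω ∫_{E₀} |x − y|^{−n−s} dy dx`. -/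
noncomputable def fracPerimeterExt (n : ℕ) (E₀ Ω : Set (EuclideanSpace ℝ (Fin n)))
    (s : ℝ) : ℝ :=
  ∫ x in Ω, ∫ y in E₀, 1 / ‖x - y‖ ^ ((n : ℝ) + s)

/-- The divergence of a vector field, `div X x = trace (DX(x))`. -/
noncomputable def divergence (n : ℕ)
    (X : EuclideanSpace ℝ (Fin n) → EuclideanSpace ℝ (Fin n))
    (x : EuclideanSpace ℝ (Fin n)) : ℝ :=
  LinearMap.trace ℝ (EuclideanSpace ℝ (Fin n)) (fderiv ℝ X x : _ →ₗ[ℝ] _)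

/-- `Ω` has finite classical perimeter (De Giorgi / distributional definition). -/
def HasFinitePerimeter (n : ℕ) (Ω : Set (EuclideanSpace ℝ (Fin n))) : Prop :=
  ∃ P : ℝ, ∀ X : EuclideanSpace ℝ (Fin n) → EuclideanSpace ℝ (Fin n),
    ContDiff ℝ 1 X → HasCompactSupport X → (∀ x, ‖X x‖ ≤ 1) →
    (∫ x in Ω, divergence n X x) ≤ P

section Limsup

variable {ι : Type*} {l : Filter ι} [l.NeBot] {u v : ι → ℝ}

theorem limsup_mul_const_of_nonneg {c : ℝ} (hc : 0 ≤ c) (hu : IsBoundedUnder (· ≤ ·) l u)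
    (hu' : IsCoboundedUnder (· ≤ ·) l u) :
    limsup (fun i ↦ u i * c) l = limsup u l * c :=
  ((monotone_mul_right_of_nonneg hc).map_limsup_of_continuousAt u
    (continuous_mul_const c).continuousAt hu hu').symm

theorem limsup_eq_limsup_of_tendsto_sub_zero (hu : IsBoundedUnder (· ≤ ·) l u)
    (hu' : IsBoundedUnder (· ≥ ·) l u) (h : Tendsto (v - u) l (𝓝 0)) :
    limsup v l = limsup u l := by
  rw [← add_sub_cancel u v]
  apply le_antisymm
  · simpa only [h.limsup_eq, add_zero] using
      limsup_add_le hu' hu h.isBoundedUnder_ge.isCoboundedUnder_le h.isBoundedUnder_le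
  · simpa only [h.liminf_eq, add_zero] using
      le_limsup_add hu hu'.isCoboundedUnder_le h.isBoundedUnder_le h.isBoundedUnder_ge

end Limsup

section Rpow

theorem rpow_neg_le_rpow_neg_add_one {r p q : ℝ} (hr : 0 ≤ r) (hp : 0 ≤ p) (hpq : p ≤ q) :
    r ^ (-p) ≤ r ^ (-q) + 1 := by
  have hq : 0 ≤ r ^ (-q) := Real.rpow_nonneg hr _
  rcases hr.eq_or_lt with rfl | hr₀
  · linarith [Real.zero_rpow_le_one (-p)]
  rcases le_total r 1 with hr₁ | hr₁
  · linarith [Real.rpow_le_rpow_of_exponent_ge hr₀ hr₁ (neg_le_neg hpq)]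
  · linarith [Real.rpow_le_one_of_one_le_of_nonpos hr₁ (neg_nonpos.2 hp)]

theorem abs_rpow_neg_sub_rpow_neg_le {p m a b : ℝ} (hp : 0 ≤ p) (hm : 0 < m) (ha : m ≤ a)
    (hb : m ≤ b) : |a ^ (-p) - b ^ (-p)| ≤ p * m ^ (-(p + 1)) * |a - b| := by
  refine (convex_Ici m).norm_image_sub_le_of_norm_hasDerivWithin_le (f := fun x ↦ x ^ (-p))
    (f' := fun x ↦ -p * x ^ (-p - 1)) (fun x hx ↦ ?_) (fun x hx ↦ ?_) hb ha
  · exact (Real.hasDerivAt_rpow_const (Or.inl (hm.trans_le hx).ne')).hasDerivWithinAt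
  · rw [norm_mul, norm_neg, Real.norm_of_nonneg hp,
      Real.norm_of_nonneg (Real.rpow_nonneg (hm.le.trans hx) _), ← neg_add']
    exact mul_le_mul_of_nonneg_left
      (Real.rpow_le_rpow_of_nonpos hm hx (by linarith)) hp

variable {E : Type*} [NormedAddCommGroup E]

theorem enorm_rpow_of_ne_zero {x : E} (hx : x ≠ 0) (p : ℝ) :
    ‖x‖ₑ ^ p = ENNReal.ofReal (‖x‖ ^ p) := by
  rw [← ofReal_norm, ENNReal.ofReal_rpow_of_pos (norm_pos_iff.2 hx)]

theorem enorm_rpow_norm_le (x : E) (p : ℝ) : ‖‖x‖ ^ p‖ₑ ≤ ‖x‖ₑ ^ p := by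
  rcases eq_or_ne x 0 with rfl | hx
  · rcases eq_or_ne p 0 with rfl | hp
    · simp
    · simp [Real.zero_rpow hp]
  · rw [enorm_rpow_of_ne_zero hx, Real.enorm_of_nonneg (by positivity)]

end Rpow

section TailKernel

variable {E : Type*} [NormedAddCommGroup E]

/-- The kernel `|y|^{-p}` of the tail integral defining `ᾱ`, extended by zero inside the unit
ball. -/
noncomputable def tailKernel (p : ℝ) : E → ℝ :=
  (ball 0 1)ᶜ.indicator fun y ↦ ‖y‖ ^ (-p)

theorem tailKernel_of_one_le {p : ℝ} {y : E} (hy : 1 ≤ ‖y‖) : tailKernel p y = ‖y‖ ^ (-p) :=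
  Set.indicator_of_mem (by simpa using hy) _

theorem tailKernel_nonneg (p : ℝ) (y : E) : 0 ≤ tailKernel p y :=
  Set.indicator_nonneg (fun _ _ ↦ Real.rpow_nonneg (norm_nonneg _) _) y

theorem tailKernel_le_one {p : ℝ} (hp : 0 ≤ p) (y : E) : tailKernel p y ≤ 1 :=
  Set.indicator_apply_le' (fun hy ↦ Real.rpow_le_one_of_one_le_of_nonpos (by simpa using hy)
    (neg_nonpos.2 hp)) fun _ ↦ zero_le_one

theorem tailKernel_eq_indicator_norm (p : ℝ) :
    (tailKernel p : E → ℝ) = fun y ↦ (Set.Ici 1).indicator (fun r ↦ r ^ (-p)) ‖y‖ := by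
  classical
  ext y
  simp only [tailKernel, Set.indicator_apply, Set.mem_compl_iff, mem_ball_zero_iff, not_lt,
    Set.mem_Ici]

theorem tailKernel_eq_zero [Subsingleton E] (p : ℝ) (y : E) : tailKernel p y = 0 := by
  simp [tailKernel, Subsingleton.elim y 0]

variable {d p q M : ℝ} {x y : E}

theorem abs_rpow_norm_sub_sub_tailKernel_le_of_norm_le (hp : 0 ≤ p) (hpq : p ≤ q)
    (hd : 0 ≤ d) (hy : ‖y‖ ≤ 2 * M + 1) :
    |‖x - y‖ ^ (-p) - tailKernel p y| ≤
      ‖x - y‖ ^ (-q) + (2 * M + 2) ^ (d + 1) * (1 + ‖y‖) ^ (-(d + 1)) := by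
  have one_le : 1 ≤ (2 * M + 2) ^ (d + 1) * (1 + ‖y‖) ^ (-(d + 1)) := by
    rw [Real.rpow_neg (by positivity), ← div_eq_mul_inv, one_le_div (by positivity)]
    exact Real.rpow_le_rpow (by positivity) (by linarith) (by positivity)
  have := rpow_neg_le_rpow_neg_add_one (norm_nonneg (x - y)) hp hpq
  have := Real.rpow_nonneg (norm_nonneg (x - y)) (-p)
  have := Real.rpow_nonneg (norm_nonneg (x - y)) (-q)
  have := tailKernel_nonneg p y
  have := tailKernel_le_one hp y
  rw [abs_le]
  constructor <;> linarith

theorem abs_rpow_norm_sub_sub_tailKernel_le_of_le_norm (hp : 0 ≤ p) (hx : ‖x‖ ≤ M)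
    (hy : 2 * M + 1 ≤ ‖y‖) :
    |‖x - y‖ ^ (-p) - tailKernel p y| ≤ p * M * 2 ^ (p + 1) * (1 + ‖y‖) ^ (-(p + 1)) := by
  have hM : 0 ≤ M := (norm_nonneg x).trans hx
  have hxy : |‖x - y‖ - ‖y‖| ≤ M := by
    simpa [norm_sub_rev x y] using (abs_norm_sub_norm_le (y - x) y).trans (by simpa using hx)
  have hxy' : (1 + ‖y‖) / 2 ≤ ‖x - y‖ := by linarith [(abs_le.1 hxy).1]
  rw [tailKernel_of_one_le (by linarith)]
  calc |‖x - y‖ ^ (-p) - ‖y‖ ^ (-p)|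
      ≤ p * ((1 + ‖y‖) / 2) ^ (-(p + 1)) * |‖x - y‖ - ‖y‖| :=
        abs_rpow_neg_sub_rpow_neg_le hp (by positivity) hxy' (by linarith)
    _ ≤ p * ((1 + ‖y‖) / 2) ^ (-(p + 1)) * M := by gcongr
    _ = p * M * 2 ^ (p + 1) * (1 + ‖y‖) ^ (-(p + 1)) := by
        rw [Real.div_rpow (by positivity) zero_le_two, Real.rpow_neg zero_le_two (p + 1),
          div_inv_eq_mul]
        ring

theorem exists_abs_rpow_norm_sub_sub_tailKernel_le (hd : 0 ≤ d) (q M : ℝ) :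
    ∃ C, ∀ p ∈ Set.Icc d q, ∀ x y : E, ‖x‖ ≤ M →
      |‖x - y‖ ^ (-p) - tailKernel p y| ≤ ‖x - y‖ ^ (-q) + C * (1 + ‖y‖) ^ (-(d + 1)) := by
  refine ⟨max ((2 * M + 2) ^ (d + 1)) (q * M * 2 ^ (q + 1)), fun p ⟨hdp, hpq⟩ x y hx ↦ ?_⟩
  have hp : 0 ≤ p := hd.trans hdp
  have hq : 0 ≤ q := hp.trans hpq
  have hM : 0 ≤ M := (norm_nonneg x).trans hx
  rcases le_total ‖y‖ (2 * M + 1) with hy | hy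
  · refine (abs_rpow_norm_sub_sub_tailKernel_le_of_norm_le hp hpq hd hy).trans ?_
    gcongr
    exact le_max_left _ _
  · have hy₁ : 1 ≤ 1 + ‖y‖ := by linarith [norm_nonneg y]
    calc |‖x - y‖ ^ (-p) - tailKernel p y|
        ≤ p * M * 2 ^ (p + 1) * (1 + ‖y‖) ^ (-(p + 1)) :=
          abs_rpow_norm_sub_sub_tailKernel_le_of_le_norm hp hx hy
      _ ≤ q * M * 2 ^ (q + 1) * (1 + ‖y‖) ^ (-(d + 1)) := by
          gcongr
          exact one_le_two
      _ ≤ max ((2 * M + 2) ^ (d + 1)) (q * M * 2 ^ (q + 1)) * (1 + ‖y‖) ^ (-(d + 1)) := by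
          gcongr
          exact le_max_right _ _
      _ ≤ _ := le_add_of_nonneg_left (Real.rpow_nonneg (norm_nonneg _) _)

end TailKernel

section RadialIntegrals

open Module

variable {E : Type*} [NormedAddCommGroup E] [NormedSpace ℝ E] [FiniteDimensional ℝ E]
  [MeasurableSpace E] [BorelSpace E] (μ : Measure E) [μ.IsAddHaarMeasure]

theorem pow_smul_indicator_Ici_one_rpow {d : ℕ} (hd : 1 ≤ d) (s : ℝ) :
    Set.EqOn (fun r : ℝ ↦ r ^ (d - 1) • (Set.Ici 1).indicator (fun r ↦ r ^ (-(d + s))) r)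
      ((Set.Ici 1).indicator fun r ↦ r ^ (-1 - s)) (Set.Ioi 0) := by
  intro r hr
  have hexp : r ^ (d - 1) * r ^ (-(d + s)) = r ^ (-1 - s) := by
    rw [← Real.rpow_natCast, ← Real.rpow_add hr]
    congr 1
    push_cast [hd]
    ring
  simp only [Set.indicator_apply, smul_eq_mul, mul_ite, mul_zero, hexp]

theorem integrable_tailKernel {s : ℝ} (hs : 0 < s) :
    Integrable (tailKernel (finrank ℝ E + s)) μ := by
  cases subsingleton_or_nontrivial E
  · simp [funext (tailKernel_eq_zero (E := E) _)]
  rw [tailKernel_eq_indicator_norm, integrable_fun_norm_addHaar,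
    integrableOn_congr_fun (pow_smul_indicator_Ici_one_rpow finrank_pos s) measurableSet_Ioi]
  refine (IntegrableOn.integrable_indicator ?_ measurableSet_Ici).integrableOn
  rw [integrableOn_Ici_iff_integrableOn_Ioi]
  exact integrableOn_Ioi_rpow_of_lt (by linarith) one_pos

theorem integral_tailKernel {s : ℝ} (hs : 0 < s) :
    ∫ y, tailKernel (finrank ℝ E + s) y ∂μ = finrank ℝ E * μ.real (ball 0 1) / s := by
  cases subsingleton_or_nontrivial E
  · simp [tailKernel_eq_zero, finrank_zero_of_subsingleton]
  rw [tailKernel_eq_indicator_norm, integral_fun_norm_addHaar,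
    setIntegral_congr_fun measurableSet_Ioi (pow_smul_indicator_Ici_one_rpow finrank_pos s),
    setIntegral_indicator measurableSet_Ici,
    Set.inter_eq_right.2 (Set.Ici_subset_Ioi.2 one_pos), integral_Ici_eq_integral_Ioi,
    integral_Ioi_rpow_of_lt (by linarith) one_pos, Real.one_rpow,
    show -1 - s + 1 = -s by ring, neg_div_neg_eq, nsmul_eq_mul, smul_eq_mul, mul_one_div,
    mul_div_assoc]

theorem lintegral_ball_enorm_rpow_neg_lt_top [Nontrivial E] {a : ℝ} (ha : a < finrank ℝ E) :
    ∫⁻ x in ball 0 1, ‖x‖ₑ ^ (-a) ∂μ < ⊤ := by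
  have hint : IntegrableOn (fun x : E ↦ ‖x‖ ^ (-a)) (ball 0 1) μ := by
    refine integrableOn_ball_of_norm_le_rpow finrank_pos ha (C := 1) (.of_forall fun x ↦ ?_)
      (by fun_prop : Measurable fun x : E ↦ ‖x‖ ^ (-a)).aestronglyMeasurable
    rw [one_mul, Real.norm_of_nonneg (by positivity)]
  rw [lintegral_congr_ae (ae_restrict_of_ae ((Measure.ae_ne μ 0).mono
    fun x hx ↦ enorm_rpow_of_ne_zero hx _))]
  exact hint.lintegral_lt_top

theorem lintegral_compl_ball_enorm_rpow_neg_lt_top {s : ℝ} (hs : 0 < s) :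
    ∫⁻ x in (ball 0 1)ᶜ, ‖x‖ₑ ^ (-(finrank ℝ E + s)) ∂μ < ⊤ := by
  suffices h : Set.EqOn (fun x : E ↦ ‖x‖ₑ ^ (-(finrank ℝ E + s)))
      (fun x ↦ ENNReal.ofReal (tailKernel (finrank ℝ E + s) x)) (ball 0 1)ᶜ by
    rw [setLIntegral_congr_fun measurableSet_ball.compl h]
    exact (integrable_tailKernel μ hs).integrableOn.lintegral_lt_top
  intro x hx
  have hx : 1 ≤ ‖x‖ := by simpa using hx
  simp only [tailKernel_of_one_le hx]
  exact enorm_rpow_of_ne_zero (norm_pos_iff.1 (one_pos.trans_le hx)) _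

theorem lintegral_enorm_rpow_neg_mul_lt_top {s : ℝ} (hs : 0 < s) (hs₁ : s < 1) {w : E → ENNReal}
    {P V : ENNReal} (hP : P ≠ ⊤) (hV : V ≠ ⊤) (hwP : ∀ h, w h ≤ P * ‖h‖ₑ) (hwV : ∀ h, w h ≤ V) :
    ∫⁻ h, ‖h‖ₑ ^ (-(finrank ℝ E + s)) * w h ∂μ < ⊤ := by
  have hw₀ : w 0 = 0 := by simpa using hwP 0
  cases subsingleton_or_nontrivial E
  · simp [Subsingleton.elim (_ : E) 0, hw₀]
  have hnear (h : E) : ‖h‖ₑ ^ (-(finrank ℝ E + s)) * w h ≤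
      P * ‖h‖ₑ ^ (-(finrank ℝ E + s - 1)) := by
    rcases eq_or_ne h 0 with rfl | hh
    · simp [hw₀]
    calc ‖h‖ₑ ^ (-(finrank ℝ E + s)) * w h
        ≤ ‖h‖ₑ ^ (-(finrank ℝ E + s)) * (P * ‖h‖ₑ ^ (1 : ℝ)) := by
          rw [ENNReal.rpow_one]
          gcongr
          exact hwP h
      _ = P * ‖h‖ₑ ^ (-(finrank ℝ E + s - 1)) := by
          rw [mul_left_comm, ← ENNReal.rpow_add _ _ (enorm_ne_zero.2 hh) enorm_ne_top]
          ring_nf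
  rw [← lintegral_add_compl _ (measurableSet_ball (x := (0 : E)) (ε := 1)), ENNReal.add_lt_top]
  constructor
  · refine (lintegral_mono hnear).trans_lt ?_
    rw [lintegral_const_mul' _ _ hP]
    exact ENNReal.mul_lt_top hP.lt_top
      (lintegral_ball_enorm_rpow_neg_lt_top μ (by linarith))
  · refine (lintegral_mono fun h ↦ mul_le_mul_right (hwV h) _).trans_lt ?_
    rw [lintegral_mul_const' _ _ hV]
    exact ENNReal.mul_lt_top (lintegral_compl_ball_enorm_rpow_neg_lt_top μ hs) hV.lt_top

end RadialIntegrals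

section Translation

theorem hasDerivAt_integral_comp_add_smul {E : Type*} [NormedAddCommGroup E] [NormedSpace ℝ E]
    [MeasurableSpace E] [BorelSpace E] (μ : Measure E) [IsFiniteMeasure μ] {φ : E → ℝ}
    (hφ : ContDiff ℝ 1 φ) (hφc : HasCompactSupport φ) (h : E) (t : ℝ) :
    HasDerivAt (fun t : ℝ ↦ ∫ x, φ (x + t • h) ∂μ) (∫ x, fderiv ℝ φ (x + t • h) h ∂μ) t := by
  have hφ' : Continuous (fderiv ℝ φ) := hφ.continuous_fderiv one_ne_zero
  obtain ⟨B, hB⟩ := hφc.exists_bound_of_continuous hφ.continuous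
  obtain ⟨C, hC⟩ := (hφc.fderiv (𝕜 := ℝ)).exists_bound_of_continuous hφ'
  have hmeas (t : ℝ) : AEStronglyMeasurable (fun x ↦ φ (x + t • h)) μ :=
    (hφ.continuous.comp (continuous_add_const _)).aestronglyMeasurable
  refine (hasDerivAt_integral_of_dominated_loc_of_deriv_le
    (F' := fun (t : ℝ) x ↦ fderiv ℝ φ (x + t • h) h) (bound := fun _ ↦ C * ‖h‖)
    univ_mem (.of_forall hmeas) (.of_bound (hmeas t) B (.of_forall fun x ↦ hB _)) ?_
    (.of_forall fun x t _ ↦ ContinuousLinearMap.le_of_opNorm_le _ (hC _) h)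
    (integrable_const _) (.of_forall fun x t _ ↦ ?_)).2
  · exact ((hφ'.comp (continuous_add_const _)).clm_apply continuous_const).aestronglyMeasurable
  · have hline : HasDerivAt (fun t : ℝ ↦ x + t • h) h t := by
      simpa using ((hasDerivAt_id t).smul_const h).const_add x
    exact (hφ.differentiable one_ne_zero _).hasFDerivAt.comp_hasDerivAt t hline

theorem exists_contDiff_support_subset_eq_one {E : Type*} [NormedAddCommGroup E]
    [NormedSpace ℝ E] [FiniteDimensional ℝ E] (m : ℕ∞) {K U : Set E} (hK : IsCompact K)
    (hU : IsOpen U) (hKU : K ⊆ U) :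
    ∃ φ : E → ℝ, ContDiff ℝ m φ ∧ HasCompactSupport φ ∧ (∀ x, φ x ∈ Set.Icc 0 1) ∧
      Function.support φ ⊆ U ∧ ∀ x ∈ K, φ x = 1 := by
  obtain ⟨r, hr⟩ := hK.isBounded.subset_ball 0
  obtain ⟨φ, hφ, hφr, hφs, hφK⟩ := exists_contMDiff_support_eq_eq_one_iff (n := m)
    (modelWithCornersSelf ℝ E) (hU.inter isOpen_ball) hK.isClosed (Set.subset_inter hKU hr)
  refine ⟨φ, hφ.contDiff, ?_, fun x ↦ hφr ⟨x, rfl⟩, hφs.trans_subset Set.inter_subset_left,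
    fun x hx ↦ (hφK x).1 hx⟩
  exact .of_support_subset_isCompact (isCompact_closedBall 0 r)
    (hφs.trans_subset (Set.inter_subset_right.trans ball_subset_closedBall))

end Translation

section Perimeter

variable {n : ℕ} {Ω : Set (EuclideanSpace ℝ (Fin n))} {P : ℝ}

/-- `Ω` has classical perimeter at most `P` in the sense of De Giorgi, so that
`HasFinitePerimeter n Ω` unfolds to `∃ P, PerimeterLE n Ω P`. -/
def PerimeterLE (n : ℕ) (Ω : Set (EuclideanSpace ℝ (Fin n))) (P : ℝ) : Prop :=
  ∀ X : EuclideanSpace ℝ (Fin n) → EuclideanSpace ℝ (Fin n),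
    ContDiff ℝ 1 X → HasCompactSupport X → (∀ x, ‖X x‖ ≤ 1) →
    (∫ x in Ω, divergence n X x) ≤ P

theorem divergence_smul_const {φ : EuclideanSpace ℝ (Fin n) → ℝ} {x : EuclideanSpace ℝ (Fin n)}
    (hφ : DifferentiableAt ℝ φ x) (v : EuclideanSpace ℝ (Fin n)) :
    divergence n (fun y ↦ φ y • v) x = fderiv ℝ φ x v := by
  rw [divergence, (hφ.hasFDerivAt.smul_const v).fderiv]
  exact LinearMap.trace_smulRight _ _

theorem PerimeterLE.integral_fderiv_apply_le (hP : PerimeterLE n Ω P)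
    {φ : EuclideanSpace ℝ (Fin n) → ℝ} (hφ : ContDiff ℝ 1 φ) (hφc : HasCompactSupport φ)
    (hφ₁ : ∀ x, |φ x| ≤ 1) (h : EuclideanSpace ℝ (Fin n)) :
    ∫ x in Ω, fderiv ℝ φ x h ≤ P * ‖h‖ := by
  set v := ‖h‖⁻¹ • h
  have hv : ‖v‖ ≤ 1 := by
    rw [norm_smul, norm_inv, norm_norm]
    exact inv_mul_le_one
  have hvh : h = ‖h‖ • v := by
    rcases eq_or_ne h 0 with rfl | hh
    · simp
    · rw [smul_inv_smul₀ (norm_ne_zero_iff.2 hh)]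
  have hdiv : ∫ x in Ω, fderiv ℝ φ x v ≤ P := by
    simpa only [divergence_smul_const (hφ.differentiable one_ne_zero _)] using
      hP (fun x ↦ φ x • v) (hφ.smul contDiff_const) hφc.smul_right fun x ↦ by
        rw [norm_smul]
        exact mul_le_one₀ (hφ₁ x) (norm_nonneg _) hv
  calc ∫ x in Ω, fderiv ℝ φ x h = (∫ x in Ω, fderiv ℝ φ x v) * ‖h‖ := by
        rw [← integral_mul_const]
        congr with x
        rw [mul_comm, ← smul_eq_mul, ← map_smul, ← hvh]
    _ ≤ P * ‖h‖ := by gcongr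

theorem PerimeterLE.integral_comp_add_right_sub_le (hP : PerimeterLE n Ω P) (hΩ : volume Ω ≠ ⊤)
    {φ : EuclideanSpace ℝ (Fin n) → ℝ} (hφ : ContDiff ℝ 1 φ) (hφc : HasCompactSupport φ)
    (hφ₁ : ∀ x, |φ x| ≤ 1) (h : EuclideanSpace ℝ (Fin n)) :
    (∫ x in Ω, φ (x + h)) - ∫ x in Ω, φ x ≤ P * ‖h‖ := by
  have : Fact (volume Ω < ⊤) := ⟨hΩ.lt_top⟩
  have hderiv := hasDerivAt_integral_comp_add_smul (volume.restrict Ω) hφ hφc h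
  have hderiv_le (t : ℝ) : deriv (fun t : ℝ ↦ ∫ x in Ω, φ (x + t • h)) t ≤ P * ‖h‖ := by
    simpa only [(hderiv t).deriv, fderiv_comp_add_right] using
      hP.integral_fderiv_apply_le (φ := fun x ↦ φ (x + t • h))
        (hφ.comp (contDiff_id.add contDiff_const)) (hφc.comp_homeomorph (Homeomorph.addRight _))
        (fun x ↦ hφ₁ _) h
  simpa using image_sub_le_mul_sub_of_deriv_le (fun t ↦ (hderiv t).differentiableAt)
    hderiv_le zero_le_one

theorem PerimeterLE.measure_inter_preimage_le_of_isCompact (hP : PerimeterLE n Ω P)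
    (hΩ : volume Ω ≠ ⊤) {K : Set (EuclideanSpace ℝ (Fin n))} (hK : IsCompact K)
    (hKΩ : Disjoint K Ω) (h : EuclideanSpace ℝ (Fin n)) :
    volume (Ω ∩ (· + h) ⁻¹' K) ≤ ENNReal.ofReal (P * ‖h‖) := by
  have : Fact (volume Ω < ⊤) := ⟨hΩ.lt_top⟩
  suffices hreal : volume.real (Ω ∩ (· + h) ⁻¹' K) ≤ P * ‖h‖ by
    rw [← ofReal_measureReal (measure_ne_top_of_subset Set.inter_subset_left hΩ)]
    exact ENNReal.ofReal_le_ofReal hreal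
  refine le_of_forall_pos_le_add fun ε hε ↦ ?_
  obtain ⟨U, hKU, hU, -, hUε⟩ := hK.measurableSet.exists_isOpen_sdiff_lt (μ := volume)
    hK.measure_lt_top.ne (ENNReal.ofReal_pos.2 hε).ne'
  obtain ⟨φ, hφ, hφc, hφ₁, hφU, hφK⟩ := exists_contDiff_support_subset_eq_one 1 hK hU hKU
  have habs (x) : |φ x| ≤ 1 := abs_le.2 ⟨by linarith [(hφ₁ x).1], (hφ₁ x).2⟩
  have hlower : volume.real (Ω ∩ (· + h) ⁻¹' K) ≤ ∫ x in Ω, φ (x + h) := by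
    have hcont : Continuous fun x ↦ φ (x + h) := hφ.continuous.comp (continuous_add_const h)
    calc volume.real (Ω ∩ (· + h) ⁻¹' K) ≤ volume.real ({x | 1 ≤ φ (x + h)} ∩ Ω) :=
          measureReal_mono (fun x hx ↦ ⟨(hφK _ hx.2).ge, hx.1⟩)
            (measure_ne_top_of_subset Set.inter_subset_right hΩ)
      _ = 1 * (volume.restrict Ω).real {x | 1 ≤ φ (x + h)} := by
          rw [one_mul, measureReal_restrict_apply
            (measurableSet_le measurable_const hcont.measurable)]
      _ ≤ ∫ x in Ω, φ (x + h) :=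
          mul_meas_ge_le_integral_of_nonneg (.of_forall fun x ↦ (hφ₁ _).1)
            (.of_bound hcont.aestronglyMeasurable 1 (.of_forall fun x ↦ habs _)) 1
  have hupper : ∫ x in Ω, φ x ≤ ε := by
    refine (ENNReal.ofReal_le_ofReal_iff hε.le).1 ?_
    calc ENNReal.ofReal (∫ x in Ω, φ x) ≤ volume.restrict Ω U :=
          integral_le_measure (fun x _ ↦ (hφ₁ x).2)
            fun x hx ↦ (Function.notMem_support.1 fun hx' ↦ hx (hφU hx')).le
      _ = volume (U ∩ Ω) := Measure.restrict_apply hU.measurableSet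
      _ ≤ volume (U \ K) := measure_mono fun x hx ↦ ⟨hx.1, hKΩ.notMem_of_mem_right hx.2⟩
      _ ≤ ENNReal.ofReal ε := hUε.le
  linarith [hP.integral_comp_add_right_sub_le hΩ hφ hφc habs h]

theorem PerimeterLE.measure_inter_preimage_compl_le (hP : PerimeterLE n Ω P)
    (hΩm : MeasurableSet Ω) (hΩ : volume Ω ≠ ⊤) (h : EuclideanSpace ℝ (Fin n)) :
    volume (Ω ∩ (· + h) ⁻¹' Ωᶜ) ≤ ENNReal.ofReal (P * ‖h‖) := by
  rw [(hΩm.inter (hΩm.compl.preimage (measurable_add_const h))).measure_eq_iSup_isCompact]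
  refine iSup₂_le fun K hKΩ ↦ iSup_le fun hK ↦ ?_
  have hdisj : Disjoint ((· + h) '' K) Ω :=
    Set.disjoint_left.2 (Set.forall_mem_image.2 fun x hx ↦ (hKΩ hx).2)
  calc volume K ≤ volume (Ω ∩ (· + h) ⁻¹' ((· + h) '' K)) :=
        measure_mono fun x hx ↦ ⟨(hKΩ hx).1, Set.mem_image_of_mem _ hx⟩
    _ ≤ ENNReal.ofReal (P * ‖h‖) :=
        hP.measure_inter_preimage_le_of_isCompact hΩ (hK.image (continuous_add_const h)) hdisj h

end Perimeter

section RieszInteraction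

variable {E : Type*} [NormedAddCommGroup E] [MeasurableSpace E]

/-- The interaction `∫_A ∫_B |x - y|^{-p} dy dx`, which is `L_s(A, B)` for `p = n + s`. It takes
values in `ENNReal`, so that a divergent interaction is `⊤`. -/
noncomputable def rieszInteraction (μ : Measure E) (p : ℝ) (A B : Set E) : ENNReal :=
  ∫⁻ x in A, ∫⁻ y in B, ‖x - y‖ₑ ^ (-p) ∂μ ∂μ

variable {μ : Measure E} {p : ℝ} {A B B' : Set E}

theorem rieszInteraction_mono_right (h : B ⊆ B') :
    rieszInteraction μ p A B ≤ rieszInteraction μ p A B' :=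
  lintegral_mono fun _ ↦ lintegral_mono_set h

variable [BorelSpace E] [SecondCountableTopology E]

theorem rieszInteraction_eq_lintegral_mul_measure [SFinite μ] [μ.IsAddLeftInvariant]
    (hB : MeasurableSet B) :
    rieszInteraction μ p A B = ∫⁻ h, ‖h‖ₑ ^ (-p) * μ (A ∩ (· + h) ⁻¹' B) ∂μ := by
  have hmeas : Measurable fun z : E × E ↦ ‖z.2‖ₑ ^ (-p) * B.indicator 1 (z.1 + z.2) :=
    (by fun_prop : Measurable fun z : E × E ↦ ‖z.2‖ₑ ^ (-p)).mul
      ((measurable_one.indicator hB).comp measurable_add)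
  calc rieszInteraction μ p A B
      = ∫⁻ x in A, ∫⁻ h, ‖h‖ₑ ^ (-p) * B.indicator 1 (x + h) ∂μ ∂μ := by
        refine lintegral_congr fun x ↦ ?_
        rw [← lintegral_indicator hB, ← lintegral_add_left_eq_self _ x]
        refine lintegral_congr fun h ↦ ?_
        by_cases hxh : x + h ∈ B <;> simp [hxh]
    _ = ∫⁻ h, ∫⁻ x in A, ‖h‖ₑ ^ (-p) * B.indicator 1 (x + h) ∂μ ∂μ :=
        lintegral_lintegral_swap hmeas.aemeasurable
    _ = ∫⁻ h, ‖h‖ₑ ^ (-p) * μ (A ∩ (· + h) ⁻¹' B) ∂μ := by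
        refine lintegral_congr fun h ↦ ?_
        have hBh : MeasurableSet ((· + h) ⁻¹' B) := hB.preimage (measurable_add_const h)
        rw [Set.inter_comm, ← Measure.restrict_apply hBh, ← lintegral_indicator_one hBh,
          ← lintegral_const_mul _ (measurable_one.indicator hBh)]
        rfl

theorem integrable_rpow_norm_sub_of_rieszInteraction_ne_top [SFinite μ]
    (h : rieszInteraction μ p A B ≠ ⊤) :
    Integrable (fun z : E × E ↦ ‖z.1 - z.2‖ ^ (-p)) ((μ.restrict A).prod (μ.restrict B)) := by
  have hmeas : Measurable fun z : E × E ↦ ‖z.1 - z.2‖ ^ (-p) := by fun_prop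
  refine ⟨hmeas.aestronglyMeasurable, ?_⟩
  rw [HasFiniteIntegral, lintegral_prod _ hmeas.enorm.aemeasurable]
  exact (lintegral_mono fun x ↦ lintegral_mono fun y ↦
    enorm_rpow_norm_le (x - y) (-p)).trans_lt h.lt_top

end RieszInteraction

theorem PerimeterLE.rieszInteraction_compl_lt_top {n : ℕ} {Ω : Set (EuclideanSpace ℝ (Fin n))}
    {P s : ℝ} (hP : PerimeterLE n Ω P) (hΩm : MeasurableSet Ω) (hΩ : volume Ω ≠ ⊤)
    (hs : 0 < s) (hs₁ : s < 1) : rieszInteraction volume (n + s) Ω Ωᶜ < ⊤ := by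
  rw [rieszInteraction_eq_lintegral_mul_measure hΩm.compl]
  simpa using lintegral_enorm_rpow_neg_mul_lt_top volume hs hs₁ (P := ENNReal.ofReal P)
    (w := fun h ↦ volume (Ω ∩ (· + h) ⁻¹' Ωᶜ)) ENNReal.ofReal_ne_top hΩ
    (fun h ↦ by
      simpa only [ENNReal.ofReal_mul' (norm_nonneg h), ofReal_norm] using
        hP.measure_inter_preimage_compl_le hΩm hΩ h)
    (fun h ↦ measure_mono Set.inter_subset_left)

section Comparison

open Module

variable {E : Type*} [NormedAddCommGroup E] [NormedSpace ℝ E] [FiniteDimensional ℝ E]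
  [MeasurableSpace E] [BorelSpace E] {μ : Measure E} [μ.IsAddHaarMeasure] {s₀ : ℝ} {A B : Set E}

theorem exists_integrable_abs_rpow_norm_sub_sub_tailKernel_le (hA : Bornology.IsBounded A)
    (hAB : rieszInteraction μ (finrank ℝ E + s₀) A B ≠ ⊤) :
    ∃ H : E × E → ℝ, Integrable H ((μ.restrict A).prod (μ.restrict B)) ∧
      ∀ s ∈ Set.Ioc 0 s₀, ∀ᵐ z ∂(μ.restrict A).prod (μ.restrict B),
        |‖z.1 - z.2‖ ^ (-(finrank ℝ E + s)) - tailKernel (finrank ℝ E + s) z.2| ≤ H z := by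
  have : Fact (μ A < ⊤) := ⟨hA.measure_lt_top⟩
  obtain ⟨M, hM⟩ := hA.subset_closedBall 0
  obtain ⟨C, hC⟩ := exists_abs_rpow_norm_sub_sub_tailKernel_le (E := E)
    (Nat.cast_nonneg (finrank ℝ E)) (finrank ℝ E + s₀) M
  have hnorm : ∀ᵐ x ∂μ.restrict A, ‖x‖ ≤ M :=
    ae_restrict_of_ae_restrict_of_subset hM <|
      (ae_restrict_mem measurableSet_closedBall).mono fun x hx ↦ mem_closedBall_zero_iff.1 hx
  have htail : Integrable (fun y : E ↦ C * (1 + ‖y‖) ^ (-(finrank ℝ E + 1 : ℝ))) (μ.restrict B) :=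
    ((integrable_one_add_norm (lt_add_one _)).const_mul C).restrict
  refine ⟨_, (integrable_rpow_norm_sub_of_rieszInteraction_ne_top hAB).add
    (htail.comp_snd (μ.restrict A)), fun s hs ↦ ?_⟩
  filter_upwards [Measure.quasiMeasurePreserving_fst.ae hnorm] with z hz
  exact hC _ ⟨by linarith [hs.1], by linarith [hs.2]⟩ z.1 z.2 hz

theorem exists_abs_setIntegral_rpow_norm_sub_sub_le (hA : Bornology.IsBounded A)
    (hAB : rieszInteraction μ (finrank ℝ E + s₀) A B ≠ ⊤) :
    ∃ D, ∀ s ∈ Set.Ioc 0 s₀, |(∫ x in A, ∫ y in B, ‖x - y‖ ^ (-(finrank ℝ E + s)) ∂μ ∂μ) -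
      (∫ y in B, tailKernel (finrank ℝ E + s) y ∂μ) * μ.real A| ≤ D := by
  have : Fact (μ A < ⊤) := ⟨hA.measure_lt_top⟩
  obtain ⟨H, hH, hHle⟩ := exists_integrable_abs_rpow_norm_sub_sub_tailKernel_le hA hAB
  refine ⟨∫ z, H z ∂(μ.restrict A).prod (μ.restrict B), fun s hs ↦ ?_⟩
  have hmeas : Measurable fun z : E × E ↦ ‖z.1 - z.2‖ ^ (-(finrank ℝ E + s)) := by fun_prop
  have htail : Integrable (fun z : E × E ↦ tailKernel (finrank ℝ E + s) z.2)
      ((μ.restrict A).prod (μ.restrict B)) :=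
    (integrable_tailKernel μ hs.1).restrict.comp_snd (μ.restrict A)
  have hker : Integrable (fun z : E × E ↦ ‖z.1 - z.2‖ ^ (-(finrank ℝ E + s)))
      ((μ.restrict A).prod (μ.restrict B)) := by
    simpa using (hH.mono' (hmeas.aestronglyMeasurable.sub htail.aestronglyMeasurable)
      (hHle s hs)).add htail
  calc |(∫ x in A, ∫ y in B, ‖x - y‖ ^ (-(finrank ℝ E + s)) ∂μ ∂μ) -
        (∫ y in B, tailKernel (finrank ℝ E + s) y ∂μ) * μ.real A|
      = |∫ z, (‖z.1 - z.2‖ ^ (-(finrank ℝ E + s)) - tailKernel (finrank ℝ E + s) z.2)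
          ∂(μ.restrict A).prod (μ.restrict B)| := by
        rw [integral_sub hker htail, integral_prod _ hker, integral_fun_snd,
          measureReal_restrict_apply_univ, smul_eq_mul, mul_comm (μ.real A)]
    _ ≤ ∫ z, H z ∂(μ.restrict A).prod (μ.restrict B) := by
        rw [← Real.norm_eq_abs]
        exact norm_integral_le_of_norm_le hH (hHle s hs)

end Comparison

section Asymptotics

variable {n : ℕ} {Ω E₀ : Set (EuclideanSpace ℝ (Fin n))} {s s₀ : ℝ}

theorem tailIntegral_zero_one_eq_setIntegral_tailKernel (hE₀ : MeasurableSet E₀) :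
    tailIntegral n E₀ s 0 1 = ∫ y in E₀, tailKernel (n + s) y := by
  classical
  rw [tailIntegral, ← integral_indicator measurableSet_ball.compl, ← integral_indicator hE₀]
  congr with y
  simp only [tailKernel, Set.indicator_apply, zero_sub, norm_neg, Real.rpow_neg (norm_nonneg y)]
  split_ifs <;> simp

theorem fracPerimeterExt_eq_setIntegral_rpow_neg :
    fracPerimeterExt n E₀ Ω s = ∫ x in Ω, ∫ y in E₀, ‖x - y‖ ^ (-(n + s)) := by
  simp only [fracPerimeterExt, Real.rpow_neg (norm_nonneg _), one_div]

theorem mul_tailIntegral_zero_one_mem_Icc (hE₀ : MeasurableSet E₀) (hs : 0 < s) :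
    s * tailIntegral n E₀ s 0 1 ∈
      Set.Icc 0 (n * volume.real (ball (0 : EuclideanSpace ℝ (Fin n)) 1)) := by
  have hint := integrable_tailKernel (E := EuclideanSpace ℝ (Fin n)) volume hs
  have htotal := integral_tailKernel (E := EuclideanSpace ℝ (Fin n)) volume hs
  rw [finrank_euclideanSpace_fin] at hint htotal
  rw [tailIntegral_zero_one_eq_setIntegral_tailKernel hE₀]
  refine ⟨mul_nonneg hs.le (integral_nonneg (tailKernel_nonneg _)), ?_⟩
  rw [mul_comm, ← le_div_iff₀ hs, ← htotal]
  exact setIntegral_le_integral hint (.of_forall (tailKernel_nonneg _))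

theorem exists_abs_fracPerimeterExt_sub_le (hΩb : Bornology.IsBounded Ω) (hE₀ : MeasurableSet E₀)
    (hΩE₀ : rieszInteraction volume (n + s₀) Ω E₀ ≠ ⊤) :
    ∃ D, ∀ s ∈ Set.Ioc 0 s₀,
      |fracPerimeterExt n E₀ Ω s - tailIntegral n E₀ s 0 1 * volume.real Ω| ≤ D := by
  simpa only [fracPerimeterExt_eq_setIntegral_rpow_neg,
    tailIntegral_zero_one_eq_setIntegral_tailKernel hE₀, finrank_euclideanSpace_fin] using
    exists_abs_setIntegral_rpow_norm_sub_sub_le hΩb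
      (by rwa [finrank_euclideanSpace_fin] : rieszInteraction volume _ Ω E₀ ≠ ⊤)

theorem tendsto_mul_fracPerimeterExt_sub (hΩb : Bornology.IsBounded Ω) (hE₀ : MeasurableSet E₀)
    (hs₀ : 0 < s₀) (hΩE₀ : rieszInteraction volume (n + s₀) Ω E₀ ≠ ⊤) :
    Tendsto (fun s ↦ s * fracPerimeterExt n E₀ Ω s - s * tailIntegral n E₀ s 0 1 * volume.real Ω)
      (𝓝[>] 0) (𝓝 0) := by
  obtain ⟨D, hD⟩ := exists_abs_fracPerimeterExt_sub_le hΩb hE₀ hΩE₀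
  have hmul : Tendsto (fun s : ℝ ↦ s * D) (𝓝[>] 0) (𝓝 0) :=
    tendsto_nhdsWithin_of_tendsto_nhds (by simpa using (continuous_mul_const D).tendsto 0)
  refine squeeze_zero_norm' ?_ hmul
  filter_upwards [Ioc_mem_nhdsGT hs₀] with s hs
  rw [mul_assoc, ← mul_sub, norm_mul, Real.norm_of_nonneg hs.1.le]
  exact mul_le_mul_of_nonneg_left (hD s hs) hs.1.le

theorem fracPerimeter_asymptotics_general (hΩb : Bornology.IsBounded Ω) (hE₀ : MeasurableSet E₀)
    (hs₀ : 0 < s₀) (hΩE₀ : rieszInteraction volume (n + s₀) Ω E₀ ≠ ⊤) :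
    limsup (fun s : ℝ ↦ s * fracPerimeterExt n E₀ Ω s) (𝓝[>] 0) =
      alphaBar n E₀ * (volume Ω).toReal := by
  have hbdd : ∀ᶠ s in 𝓝[>] (0 : ℝ), s * tailIntegral n E₀ s 0 1 ∈ Set.Icc 0 _ :=
    eventually_mem_nhdsWithin.mono fun s hs ↦ mul_tailIntegral_zero_one_mem_Icc hE₀ hs
  have hle : IsBoundedUnder (· ≤ ·) (𝓝[>] 0) fun s ↦ s * tailIntegral n E₀ s 0 1 :=
    isBoundedUnder_of_eventually_le (hbdd.mono fun _ hs ↦ hs.2)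
  have hge : IsBoundedUnder (· ≥ ·) (𝓝[>] 0) fun s ↦ s * tailIntegral n E₀ s 0 1 :=
    isBoundedUnder_of_eventually_ge (hbdd.mono fun _ hs ↦ hs.1)
  have hmono : Monotone fun t : ℝ ↦ t * volume.real Ω :=
    monotone_mul_right_of_nonneg measureReal_nonneg
  calc limsup (fun s ↦ s * fracPerimeterExt n E₀ Ω s) (𝓝[>] 0)
      = limsup (fun s ↦ s * tailIntegral n E₀ s 0 1 * volume.real Ω) (𝓝[>] 0) :=
        limsup_eq_limsup_of_tendsto_sub_zero (hmono.isBoundedUnder_le_comp hle)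
          (hmono.isBoundedUnder_ge_comp hge)
          (tendsto_mul_fracPerimeterExt_sub hΩb hE₀ hs₀ hΩE₀)
    _ = alphaBar n E₀ * (volume Ω).toReal :=
        limsup_mul_const_of_nonneg measureReal_nonneg hle hge.isCoboundedUnder_le

end Asymptotics

/-- Asymptotics of the `s`-perimeter as `s → 0⁺`: if `Ω` is a bounded open set of finite
classical perimeter and `E₀ ⊆ ℝⁿ \ Ω`, then
`limsup_{s→0⁺} s · P_s(E₀, Ω) = ᾱ(E₀) · |Ω|`. -/
theorem fracPerimeter_asymptotics (n : ℕ) (Ω E₀ : Set (EuclideanSpace ℝ (Fin n)))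
    (hΩo : IsOpen Ω) (hΩb : Bornology.IsBounded Ω) (hΩp : HasFinitePerimeter n Ω)
    (hE₀ : MeasurableSet E₀) (hE₀Ω : E₀ ⊆ Ωᶜ) :
    limsup (fun s : ℝ => s * fracPerimeterExt n E₀ Ω s) (𝓝[>] (0 : ℝ)) =
      alphaBar n E₀ * (volume Ω).toReal := by
  obtain ⟨P, hP : PerimeterLE n Ω P⟩ := hΩp
  exact fracPerimeter_asymptotics_general hΩb hE₀ one_half_pos <|
    ((rieszInteraction_mono_right hE₀Ω).trans_lt <| hP.rieszInteraction_compl_lt_top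
      hΩo.measurableSet hΩb.measure_lt_top.ne one_half_pos one_half_lt_one).ne
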